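/- arXiv:1909.00495 — 5 statements merged into one kernel-verified Lean document; each statement's English description precedes it below -/
import Mathlib

section
/- Let n ≥ 2 and 1 ≤ d ≤ n−1 be integers, s ∈ ℝ, and let w be a weight such that there exists C_w > 0 with Σ_{A∈Ω_k} w(k,A)² ≤ C_w² for every k ∈ ℤ^n. Then the d-plane Radon transform R_d : H^s(𝕋^n) → L_s^{2,2}(X_{d,n};w) has an adjoint R_d^* whose Fourier coefficients are given by (R_d^* g)^(k) = Σ_{A∈Ω_k} w(k,A)² ĝ(k,A); that is, for all f ∈ H^s(𝕋^n) and g ∈ L_s^{2,2}(X_{d,n};w) one has (R_d f, g)_{L_s^{2,2}(X_{d,n};w)} = Σ_{k∈ℤ^n} ⟨k⟩^{2s} f̂(k) · conj(Σ_{A∈Ω_k} w(k,A)² ĝ(k,A)), with all series absolutely convergent. -/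
/-!
Setting: the flat torus 𝕋ⁿ = ℝⁿ/ℤⁿ and its d-plane Radon transform.

* Periodic distributions 𝒯' are modeled, via the structure theorem, by their
  Fourier coefficient sequences `ℤⁿ → ℂ` of at most polynomial growth (`PDist`).
* `Gr d n` is the Grassmannian of d-dimensional subspaces of ℚⁿ.
* The d-plane Radon transform is encoded on the Fourier side by the Fourier
  slice identity `(R_{d,A} f)^(k) = f̂(k)` if `k ⊥ A` and `0` otherwise (`radonC`).
* `hsNormSq s c = Σ_k ⟨k⟩^{2s} |c k|²` is the squared H^s(𝕋ⁿ) norm (in ℝ≥0∞),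
  `dataNormSq s w g = Σ_A Σ_k ⟨k⟩^{2s} w(k,A)² |ĝ(k,A)|²` is the squared
  L_s^{2,2}(X_{d,n}; w) norm, `hsNorm`/`dataNorm` are their square roots.
* `Wk w k = Σ_{A ∈ Ω_k} w(k,A)²` and `radonStar` is the adjoint
  `(R_d^* g)^(k) = Σ_{A ∈ Ω_k} w(k,A)² ĝ(k,A)`.
-/

open scoped ENNReal BigOperators
open MeasureTheory Classical Filter

noncomputable section

abbrev Zn (n : ℕ) := Fin n → ℤ
abbrev Tn (n : ℕ) := Fin n → AddCircle (1 : ℝ)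

/-- Japanese bracket ⟨k⟩ = (1+|k|²)^{1/2}. -/
def jap {n : ℕ} (k : Zn n) : ℝ := Real.sqrt (1 + ∑ i, ((k i : ℝ))^2)

/-- Periodic distributions on 𝕋ⁿ, modeled via their Fourier coefficients
(structure theorem: 𝒯' ≅ sequences of at most polynomial growth). -/
structure PDist (n : ℕ) where
  coef : Zn n → ℂ
  growth : ∃ C N : ℝ, 0 < C ∧ ∀ k, ‖coef k‖ ≤ C * jap k ^ N

/-- Grassmannian of d-dimensional subspaces of ℚⁿ. -/
def Gr (d n : ℕ) := {A : Submodule ℚ (Fin n → ℚ) // Module.finrank ℚ A = d}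

/-- `k ⊥ A`. -/
def perp {d n : ℕ} (k : Zn n) (A : Gr d n) : Prop :=
  ∀ v ∈ A.1, ∑ i, (k i : ℚ) * v i = 0

/-- A weight `w : ℤⁿ × Gr(d,n) → (0,∞)` with at most polynomial decay in each
variable `A`. -/
def IsWeight {d n : ℕ} (w : Zn n → Gr d n → ℝ) : Prop :=
  (∀ k A, 0 < w k A) ∧ ∀ A : Gr d n, ∃ C N : ℝ, 0 < C ∧ ∀ k, C * jap k ^ (-N) ≤ w k A

/-- Fourier-slice definition of the d-plane Radon transform `R_{d,A}`
on Fourier coefficient sequences. -/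
def radonC {d n : ℕ} (A : Gr d n) (c : Zn n → ℂ) : Zn n → ℂ :=
  fun k => if perp k A then c k else 0

/-- The d-plane Radon transform `R_{d,A}` on periodic distributions. -/
def radonD {d n : ℕ} (A : Gr d n) (f : PDist n) : PDist n :=
  ⟨radonC A f.coef, by
    obtain ⟨C, N, hC, h⟩ := f.growth
    refine ⟨C, N, hC, fun k => ?_⟩
    by_cases hk : perp k A
    · simpa [radonC, hk] using h k
    · simp only [radonC, hk, if_false, norm_zero]
      have h1 : 0 ≤ jap k ^ N := Real.rpow_nonneg (Real.sqrt_nonneg _) N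
      positivity⟩

/-- Squared H^s(𝕋ⁿ) norm `Σ_k ⟨k⟩^{2s}|c k|²` (possibly infinite). -/
def hsNormSq {n : ℕ} (s : ℝ) (c : Zn n → ℂ) : ℝ≥0∞ :=
  ∑' k : Zn n, ENNReal.ofReal (jap k ^ (2*s) * ‖c k‖^2)

/-- H^s(𝕋ⁿ) norm (possibly infinite). -/
def hsNorm {n : ℕ} (s : ℝ) (c : Zn n → ℂ) : ℝ≥0∞ := hsNormSq s c ^ (1/2 : ℝ)

/-- Squared L_s^{2,2}(X_{d,n}; w) norm (possibly infinite). -/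
def dataNormSq {d n : ℕ} (s : ℝ) (w : Zn n → Gr d n → ℝ) (g : Gr d n → Zn n → ℂ) : ℝ≥0∞ :=
  ∑' A : Gr d n, ∑' k : Zn n, ENNReal.ofReal (jap k ^ (2*s) * (w k A)^2 * ‖g A k‖^2)

/-- L_s^{2,2}(X_{d,n}; w) norm (possibly infinite). -/
def dataNorm {d n : ℕ} (s : ℝ) (w : Zn n → Gr d n → ℝ) (g : Gr d n → Zn n → ℂ) : ℝ≥0∞ :=
  dataNormSq s w g ^ (1/2 : ℝ)

/-- `W_k = Σ_{A ∈ Ω_k} w(k,A)²`. -/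
def Wk {d n : ℕ} (w : Zn n → Gr d n → ℝ) (k : Zn n) : ℝ :=
  ∑' A : {A : Gr d n // perp k A}, (w k A.1)^2

/-- The adjoint `R_d^*`: `(R_d^* g)^(k) = Σ_{A ∈ Ω_k} w(k,A)² ĝ(k,A)`. -/
def radonStar {d n : ℕ} (w : Zn n → Gr d n → ℝ) (g : Gr d n → Zn n → ℂ) : Zn n → ℂ :=
  fun k => ∑' A : {A : Gr d n // perp k A}, ((w k A.1 : ℝ) : ℂ)^2 * g A.1 k

theorem aux_summable {α : Type*} (F : α → ℝ) (hF : ∀ a, 0 ≤ F a)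
    (h : ∑' a, ENNReal.ofReal (F a) < ∞) : Summable F := by
  have := ENNReal.summable_toReal h.ne
  refine this.congr (fun a => ?_)
  exact ENNReal.toReal_ofReal (hF a)

theorem jap_pos' {n : ℕ} (k : Zn n) : 0 < jap k := by
  unfold jap
  apply Real.sqrt_pos.mpr
  positivity

/-- Adjoint of the d-plane Radon transform.
If `Σ_{A∈Ω_k} w(k,A)² ≤ C_w²` for all `k`, then for `f ∈ H^s(𝕋ⁿ)` and
`g ∈ L_s^{2,2}(X_{d,n}; w)` the inner product `(R_d f, g)_{L_s^{2,2}}` equals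
`Σ_k ⟨k⟩^{2s} f̂(k) conj(Σ_{A∈Ω_k} w(k,A)² ĝ(k,A))`, all series being
absolutely convergent; i.e. the adjoint `R_d^*` has Fourier coefficients
`(R_d^* g)^(k) = Σ_{A∈Ω_k} w(k,A)² ĝ(k,A)`. -/
theorem statement0 {n d : ℕ} (hn : 2 ≤ n) (hd1 : 1 ≤ d) (hd2 : d ≤ n - 1)
    (s : ℝ) (w : Zn n → Gr d n → ℝ) (hw : IsWeight w) (Cw : ℝ) (hCw : 0 < Cw)
    (hWsum : ∀ k : Zn n, Summable (fun A : {A : Gr d n // perp k A} => (w k A.1) ^ 2))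
    (hWle : ∀ k : Zn n, Wk w k ≤ Cw ^ 2)
    (f : PDist n) (hf : hsNormSq s f.coef < ∞)
    (g : Gr d n → PDist n) (hg : dataNormSq s w (fun A => (g A).coef) < ∞) :
    (∀ k : Zn n,
      Summable (fun A : {A : Gr d n // perp k A} => (w k A.1) ^ 2 * ‖(g A.1).coef k‖)) ∧
    Summable (fun P : Gr d n × Zn n =>
      jap P.2 ^ (2*s) * (w P.2 P.1) ^ 2 * ‖radonC P.1 f.coef P.2‖ * ‖(g P.1).coef P.2‖) ∧
    (∑' A : Gr d n, ∑' k : Zn n,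
        ((jap k ^ (2*s) * (w k A) ^ 2 : ℝ) : ℂ) * radonC A f.coef k * star ((g A).coef k))
      = ∑' k : Zn n, ((jap k ^ (2*s) : ℝ) : ℂ) * f.coef k *
          star (∑' A : {A : Gr d n // perp k A}, ((w k A.1 : ℝ) : ℂ) ^ 2 * (g A.1).coef k) := by
  have ha : ∀ k : Zn n, 0 < jap k ^ (2*s) := fun k => Real.rpow_pos_of_pos (jap_pos' k) _
  have S1 : Summable (fun P : Gr d n × Zn n =>
      jap P.2 ^ (2*s) * (w P.2 P.1)^2 * ‖(g P.1).coef P.2‖^2) := by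
    apply aux_summable
    · intro P
      have := ha P.2
      positivity
    · rw [ENNReal.tsum_prod']
      exact hg
  have S0 : Summable (fun k : Zn n => jap k ^ (2*s) * ‖f.coef k‖^2) := by
    apply aux_summable
    · intro k
      have := ha k
      positivity
    · exact hf
  have hind : ∀ k : Zn n, HasSum (fun A : Gr d n =>
      jap k ^ (2*s) * (w k A)^2 * ‖radonC A f.coef k‖^2)
      (jap k ^ (2*s) * ‖f.coef k‖^2 * Wk w k) := by
    intro k
    have h1 : HasSum (fun A : {A : Gr d n // perp k A} => (w k A.1)^2) (Wk w k) :=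
      (hWsum k).hasSum
    have h2 := (hasSum_subtype_iff_indicator (f := fun A : Gr d n => (w k A)^2)
      (s := {A | perp k A})).1 h1
    have h4 := h2.mul_left (jap k ^ (2*s) * ‖f.coef k‖^2)
    refine Eq.subst (motive := fun F : Gr d n → ℝ => HasSum F _) (funext fun A => ?_) h4
    by_cases h : perp k A
    · simp [radonC, h, Set.indicator]
      ring
    · simp [radonC, h, Set.indicator]
  have S2' : Summable (fun P : Zn n × Gr d n =>
      jap P.1 ^ (2*s) * (w P.1 P.2)^2 * ‖radonC P.2 f.coef P.1‖^2) := by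
    rw [summable_prod_of_nonneg]
    · refine ⟨fun k => (hind k).summable, ?_⟩
      simp only [fun k => (hind k).tsum_eq]
      refine Summable.of_nonneg_of_le (fun k => ?_) (fun k => ?_) (S0.mul_right (Cw^2))
      · have := ha k
        have : 0 ≤ Wk w k := tsum_nonneg fun A => sq_nonneg _
        positivity
      · have := ha k
        exact mul_le_mul_of_nonneg_left (hWle k) (by positivity)
    · intro P
      have := ha P.1
      simp only [Pi.zero_apply]
      positivity
  have S2 : Summable (fun P : Gr d n × Zn n =>
      jap P.2 ^ (2*s) * (w P.2 P.1)^2 * ‖radonC P.1 f.coef P.2‖^2) := S2'.prod_symm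
  have S3 : Summable (fun P : Gr d n × Zn n =>
      jap P.2 ^ (2*s) * (w P.2 P.1) ^ 2 * ‖radonC P.1 f.coef P.2‖ * ‖(g P.1).coef P.2‖) := by
    refine Summable.of_nonneg_of_le (fun P => ?_) (fun P => ?_) (S2.add S1)
    · have := ha P.2
      positivity
    · have h0 := ha P.2
      have h1 : 0 ≤ jap P.2 ^ (2*s) * (w P.2 P.1) ^ 2 := by positivity
      rw [mul_assoc, ← mul_add]
      apply mul_le_mul_of_nonneg_left _ h1
      nlinarith [sq_nonneg (‖radonC P.1 f.coef P.2‖ - ‖(g P.1).coef P.2‖),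
        sq_nonneg (‖radonC P.1 f.coef P.2‖), sq_nonneg (‖(g P.1).coef P.2‖)]
  refine ⟨fun k => ?_, S3, ?_⟩
  · have h1 : Summable (fun A : Gr d n => (w k A)^2 * ‖(g A).coef k‖^2) := by
      have := (S1.prod_symm.prod_factor k).mul_left (jap k ^ (2*s))⁻¹
      refine this.congr (fun A => ?_)
      have := (ha k).ne'
      simp only [Prod.swap]
      field_simp
    have h2 : Summable (fun A : {A : Gr d n // perp k A} =>
        (w k A.1)^2 * ‖(g A.1).coef k‖^2) := h1.comp_injective Subtype.val_injective
    refine Summable.of_nonneg_of_le (fun A => by positivity) (fun A => ?_) ((hWsum k).add h2)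
    have h3 : 0 ≤ (w k A.1)^2 := sq_nonneg _
    nlinarith [mul_nonneg h3 (sq_nonneg (‖(g A.1).coef k‖ - 1)),
      mul_nonneg h3 (sq_nonneg (‖(g A.1).coef k‖))]
  · have S4 : Summable (fun P : Gr d n × Zn n =>
        ((jap P.2 ^ (2*s) * (w P.2 P.1) ^ 2 : ℝ) : ℂ) * radonC P.1 f.coef P.2 *
          star ((g P.1).coef P.2)) := by
      apply Summable.of_norm
      refine S3.congr (fun P => ?_)
      have h0 := ha P.2
      rw [norm_mul, norm_mul, norm_star, Complex.norm_real, Real.norm_of_nonneg (by positivity)]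
    rw [← Summable.tsum_comm (f := fun (A : Gr d n) (k : Zn n) =>
      ((jap k ^ (2*s) * (w k A) ^ 2 : ℝ) : ℂ) * radonC A f.coef k * star ((g A).coef k)) S4]
    refine tsum_congr (fun k => ?_)
    rw [tsum_star, ← tsum_mul_left]
    refine Eq.trans ?_ (tsum_subtype {A : Gr d n | perp k A} (fun A : Gr d n =>
      ((jap k ^ (2*s) : ℝ) : ℂ) * f.coef k * star (((w k A : ℝ) : ℂ) ^ 2 * (g A).coef k))).symm
    refine tsum_congr (fun A => ?_)
    by_cases h : perp k A
    · simp [radonC, h, Set.indicator]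
      ring
    · simp [radonC, h, Set.indicator]
end
end

section
/- Let n ≥ 2 and 1 ≤ d ≤ n−1 be integers, s ∈ ℝ, and let w be a weight such that there exists C_w > 0 with W_k = Σ_{A∈Ω_k} w(k,A)² ≤ C_w² for every k ∈ ℤ^n. Then the normal operator R_d^* R_d : H^s(𝕋^n) → H^s(𝕋^n) is the Fourier multiplier associated with (W_k)_{k∈ℤ^n}, i.e. (R_d^* R_d f)^(k) = W_k f̂(k) for all f ∈ H^s(𝕋^n) and k ∈ ℤ^n. In particular, the operator F_{W_k^{−1}} ∘ R_d^* is a left inverse of R_d: it maps R_d f back to f for every periodic distribution f ∈ 𝒯'. -/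
/-!
Setting: the flat torus 𝕋ⁿ = ℝⁿ/ℤⁿ and its d-plane Radon transform.

* Periodic distributions 𝒯' are modeled, via the structure theorem, by their
  Fourier coefficient sequences `ℤⁿ → ℂ` of at most polynomial growth (`PDist`).
* `Gr d n` is the Grassmannian of d-dimensional subspaces of ℚⁿ.
* The d-plane Radon transform is encoded on the Fourier side by the Fourier
  slice identity `(R_{d,A} f)^(k) = f̂(k)` if `k ⊥ A` and `0` otherwise (`radonC`).
* `hsNormSq s c = Σ_k ⟨k⟩^{2s} |c k|²` is the squared H^s(𝕋ⁿ) norm (in ℝ≥0∞),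
  `dataNormSq s w g = Σ_A Σ_k ⟨k⟩^{2s} w(k,A)² |ĝ(k,A)|²` is the squared
  L_s^{2,2}(X_{d,n}; w) norm, `hsNorm`/`dataNorm` are their square roots.
* `Wk w k = Σ_{A ∈ Ω_k} w(k,A)²` and `radonStar` is the adjoint
  `(R_d^* g)^(k) = Σ_{A ∈ Ω_k} w(k,A)² ĝ(k,A)`.
-/

open scoped ENNReal BigOperators
open MeasureTheory Classical Filter

noncomputable section

theorem exists_perp {n d : ℕ} (hd2 : d ≤ n - 1) (k : Zn n) : ∃ A : Gr d n, perp k A := by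
  let φ : (Fin n → ℚ) →ₗ[ℚ] ℚ := ∑ i, (k i : ℚ) • LinearMap.proj i
  have hφ : ∀ v, φ v = ∑ i, (k i : ℚ) * v i := fun v => by simp [φ]
  have h1 := LinearMap.finrank_range_add_finrank_ker φ
  have h2 : Module.finrank ℚ (LinearMap.range φ) ≤ 1 := by
    simpa using Submodule.finrank_le (LinearMap.range φ)
  have h3 : d ≤ Module.finrank ℚ (LinearMap.ker φ) := by
    simp only [Module.finrank_fin_fun] at h1
    omega
  obtain ⟨f, hf⟩ := exists_linearIndependent_of_le_finrank h3
  have hg := hf.map' (LinearMap.ker φ).subtype (Submodule.ker_subtype _)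
  refine ⟨⟨Submodule.span ℚ (Set.range ((LinearMap.ker φ).subtype ∘ f)), ?_⟩, ?_⟩
  · simpa using finrank_span_eq_card hg
  · intro v hv
    have hle : Submodule.span ℚ (Set.range ((LinearMap.ker φ).subtype ∘ f)) ≤ LinearMap.ker φ := by
      rw [Submodule.span_le]
      rintro _ ⟨i, rfl⟩
      exact (f i).2
    rw [← hφ]
    exact hle hv

theorem normal_eq {n d : ℕ} (w : Zn n → Gr d n → ℝ) (f : PDist n) (k : Zn n) :
    radonStar w (fun A => (radonD A f).coef) k = ((Wk w k : ℝ) : ℂ) * f.coef k := by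
  unfold radonStar Wk
  rw [Complex.ofReal_tsum, ← tsum_mul_right]
  refine tsum_congr fun A => ?_
  simp [radonD, radonC, A.2]

/-- Normal operator.
If `W_k = Σ_{A∈Ω_k} w(k,A)² ≤ C_w²` for all `k`, then the normal operator
`R_d^* R_d` on `H^s(𝕋ⁿ)` is the Fourier multiplier with symbol `(W_k)`:
`(R_d^* R_d f)^(k) = W_k f̂(k)`; in particular `F_{W_k⁻¹} ∘ R_d^*` is a left
inverse of `R_d` on all periodic distributions. -/
theorem statement1 {n d : ℕ} (hn : 2 ≤ n) (hd1 : 1 ≤ d) (hd2 : d ≤ n - 1)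
    (s : ℝ) (w : Zn n → Gr d n → ℝ) (hw : IsWeight w) (Cw : ℝ) (hCw : 0 < Cw)
    (hWsum : ∀ k : Zn n, Summable (fun A : {A : Gr d n // perp k A} => (w k A.1) ^ 2))
    (hWle : ∀ k : Zn n, Wk w k ≤ Cw ^ 2) :
    (∀ f : PDist n, hsNormSq s f.coef < ∞ → ∀ k : Zn n,
        radonStar w (fun A => (radonD A f).coef) k = ((Wk w k : ℝ) : ℂ) * f.coef k) ∧
    (∀ f : PDist n,
        (fun k : Zn n => (((Wk w k)⁻¹ : ℝ) : ℂ) * radonStar w (fun A => (radonD A f).coef) k)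
          = f.coef) := by
  refine ⟨fun f _ k => normal_eq w f k, fun f => funext fun k => ?_⟩
  obtain ⟨A, hA⟩ := exists_perp hd2 k
  have hpos : 0 < Wk w k :=
    (hWsum k).tsum_pos (fun _ => sq_nonneg _) ⟨A, hA⟩ (pow_pos (hw.1 k A) 2)
  have hne : ((Wk w k : ℝ) : ℂ) ≠ 0 := by exact_mod_cast hpos.ne'
  rw [normal_eq, Complex.ofReal_inv, inv_mul_cancel_left₀ hne]
end
end

section
/- Let n ≥ 2 and 1 ≤ d ≤ n−1 be integers, s ∈ ℝ, and let w be a weight such that there exist c_w, C_w > 0 with c_w² ≤ W_k = Σ_{A∈Ω_k} w(k,A)² ≤ C_w² for every k ∈ ℤ^n. Then for every periodic distribution f ∈ 𝒯' one has the stability estimate ‖f‖_{H^s(𝕋^n)} ≤ (1/c_w) ‖R_d f‖_{L_s^{2,2}(X_{d,n};w)}. -/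
/-!
Setting: the flat torus 𝕋ⁿ = ℝⁿ/ℤⁿ and its d-plane Radon transform.

* Periodic distributions 𝒯' are modeled, via the structure theorem, by their
  Fourier coefficient sequences `ℤⁿ → ℂ` of at most polynomial growth (`PDist`).
* `Gr d n` is the Grassmannian of d-dimensional subspaces of ℚⁿ.
* The d-plane Radon transform is encoded on the Fourier side by the Fourier
  slice identity `(R_{d,A} f)^(k) = f̂(k)` if `k ⊥ A` and `0` otherwise (`radonC`).
* `hsNormSq s c = Σ_k ⟨k⟩^{2s} |c k|²` is the squared H^s(𝕋ⁿ) norm (in ℝ≥0∞),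
  `dataNormSq s w g = Σ_A Σ_k ⟨k⟩^{2s} w(k,A)² |ĝ(k,A)|²` is the squared
  L_s^{2,2}(X_{d,n}; w) norm, `hsNorm`/`dataNorm` are their square roots.
* `Wk w k = Σ_{A ∈ Ω_k} w(k,A)²` and `radonStar` is the adjoint
  `(R_d^* g)^(k) = Σ_{A ∈ Ω_k} w(k,A)² ĝ(k,A)`.
-/

open scoped ENNReal BigOperators
open MeasureTheory Classical Filter

noncomputable section

/-- Stability estimate.
If `c_w² ≤ W_k ≤ C_w²` for all `k`, then every periodic distribution `f ∈ 𝒯'`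
satisfies `‖f‖_{H^s(𝕋ⁿ)} ≤ (1/c_w) ‖R_d f‖_{L_s^{2,2}(X_{d,n};w)}`
(both sides possibly infinite). -/
theorem statement3 {n d : ℕ} (hn : 2 ≤ n) (hd1 : 1 ≤ d) (hd2 : d ≤ n - 1)
    (s : ℝ) (w : Zn n → Gr d n → ℝ) (hw : IsWeight w) (cw Cw : ℝ) (hcw : 0 < cw) (hCw : 0 < Cw)
    (hWsum : ∀ k : Zn n, Summable (fun A : {A : Gr d n // perp k A} => (w k A.1) ^ 2))
    (hWlb : ∀ k : Zn n, cw ^ 2 ≤ Wk w k) (hWub : ∀ k : Zn n, Wk w k ≤ Cw ^ 2) :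
    ∀ f : PDist n,
      hsNorm s f.coef ≤ ENNReal.ofReal (1 / cw) * dataNorm s w (fun A => radonC A f.coef) := by
  intro f
  have key : ENNReal.ofReal (cw ^ 2) * hsNormSq s f.coef
      ≤ dataNormSq s w (fun A => radonC A f.coef) := by
    unfold hsNormSq dataNormSq
    rw [ENNReal.tsum_comm, ← ENNReal.tsum_mul_left]
    refine ENNReal.tsum_le_tsum fun k => ?_
    have hJ : 0 ≤ jap k ^ (2*s) := Real.rpow_nonneg (Real.sqrt_nonneg _) _
    have hW : ENNReal.ofReal (Wk w k)
        = ∑' A : {A : Gr d n // perp k A}, ENNReal.ofReal ((w k A.1) ^ 2) :=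
      ENNReal.ofReal_tsum_of_nonneg (fun A => sq_nonneg _) (hWsum k)
    calc ENNReal.ofReal (cw ^ 2) * ENNReal.ofReal (jap k ^ (2*s) * ‖f.coef k‖^2)
        ≤ ENNReal.ofReal (Wk w k) * ENNReal.ofReal (jap k ^ (2*s) * ‖f.coef k‖^2) := by
          gcongr
          exact hWlb k
      _ = ∑' A : {A : Gr d n // perp k A}, ENNReal.ofReal
            (jap k ^ (2*s) * (w k A.1)^2 * ‖radonC A.1 f.coef k‖^2) := by
          rw [hW, ← ENNReal.tsum_mul_right]
          refine tsum_congr fun A => ?_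
          rw [← ENNReal.ofReal_mul (sq_nonneg _)]
          congr 1
          simp only [radonC, A.2, if_true]
          ring
      _ ≤ _ := ENNReal.tsum_comp_le_tsum_of_injective Subtype.val_injective
            (fun A : Gr d n => ENNReal.ofReal
              (jap k ^ (2*s) * (w k A)^2 * ‖radonC A f.coef k‖^2))
  have key2 := ENNReal.rpow_le_rpow key (by norm_num : (0:ℝ) ≤ 1/2)
  rw [ENNReal.mul_rpow_of_nonneg _ _ (by norm_num : (0:ℝ) ≤ 1/2),
    ENNReal.ofReal_rpow_of_nonneg (sq_nonneg _) (by norm_num), ← Real.sqrt_eq_rpow,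
    Real.sqrt_sq hcw.le] at key2
  unfold hsNorm dataNorm
  calc hsNormSq s f.coef ^ (1/2 : ℝ)
      = ENNReal.ofReal (1 / cw) * (ENNReal.ofReal cw * hsNormSq s f.coef ^ (1/2 : ℝ)) := by
        rw [← mul_assoc, ← ENNReal.ofReal_mul (by positivity), one_div_mul_cancel hcw.ne']
        simp
    _ ≤ _ := by gcongr
end
end

section
/- Let n ≥ 2 and 1 ≤ d ≤ n−1 be integers and let w be a weight such that there exist c_w, C_w > 0 with c_w² ≤ W_k ≤ C_w² for every k ∈ ℤ^n. Let r, t, s, δ ∈ ℝ with 2s + t ≥ r, δ ≥ 0 and s > 0, and let f ∈ H^{r+δ}(𝕋^n). Then the Tikhonov-regularized reconstruction P_{w,s}^α R_d^* is a regularization strategy: with the choice α(ε) = √ε one has lim_{ε→0} sup{ ‖P_{w,s}^{α(ε)} R_d^*(R_d f + g) − f‖_{H^r(𝕋^n)} : g ∈ L_t^{2,2}(X_{d,n};w), ‖g‖_{L_t^{2,2}(X_{d,n};w)} ≤ ε } = 0. -/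
/-!
Setting: the flat torus 𝕋ⁿ = ℝⁿ/ℤⁿ and its d-plane Radon transform.

* Periodic distributions 𝒯' are modeled, via the structure theorem, by their
  Fourier coefficient sequences `ℤⁿ → ℂ` of at most polynomial growth (`PDist`).
* `Gr d n` is the Grassmannian of d-dimensional subspaces of ℚⁿ.
* The d-plane Radon transform is encoded on the Fourier side by the Fourier
  slice identity `(R_{d,A} f)^(k) = f̂(k)` if `k ⊥ A` and `0` otherwise (`radonC`).
* `hsNormSq s c = Σ_k ⟨k⟩^{2s} |c k|²` is the squared H^s(𝕋ⁿ) norm (in ℝ≥0∞),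
  `dataNormSq s w g = Σ_A Σ_k ⟨k⟩^{2s} w(k,A)² |ĝ(k,A)|²` is the squared
  L_s^{2,2}(X_{d,n}; w) norm, `hsNorm`/`dataNorm` are their square roots.
* `Wk w k = Σ_{A ∈ Ω_k} w(k,A)²` and `radonStar` is the adjoint
  `(R_d^* g)^(k) = Σ_{A ∈ Ω_k} w(k,A)² ĝ(k,A)`.
-/

open scoped ENNReal BigOperators
open MeasureTheory Classical Filter

noncomputable section

/-- Symbol of the Fourier multiplier `P_{w,z}^α`:
`p_{w,z}^α(k) = 1/(W_k + α⟨k⟩^{2z})`. -/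
def pSymb {d n : ℕ} (w : Zn n → Gr d n → ℝ) (z α : ℝ) (k : Zn n) : ℝ :=
  (Wk w k + α * jap k ^ (2*z))⁻¹

/-- The Tikhonov-regularized reconstruction `P_{w,z}^α R_d^* g`. -/
def tikhRecon {d n : ℕ} (w : Zn n → Gr d n → ℝ) (z α : ℝ)
    (g : Gr d n → Zn n → ℂ) : Zn n → ℂ :=
  fun k => ((pSymb w z α k : ℝ) : ℂ) * radonStar w g k

theorem aux_cs {ι : Type*} (a b : ι → ℝ) (ha0 : ∀ i, 0 ≤ a i) (hb0 : ∀ i, 0 ≤ b i)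
    (ha : Summable fun i => a i ^ 2) (hb : Summable fun i => b i ^ 2) :
    Summable (fun i => a i * b i) ∧
      (∑' i, a i * b i) ^ 2 ≤ (∑' i, a i ^ 2) * ∑' i, b i ^ 2 := by
  have h := Real.inner_le_Lp_mul_Lq_tsum_of_nonneg (p := 2) (q := 2)
    (Real.HolderConjugate.two_two) ha0 hb0 (by simpa using ha) (by simpa using hb)
  refine ⟨Summable.of_nonneg_of_le (fun i => mul_nonneg (ha0 i) (hb0 i))
    (fun i => ?_) (ha.add hb), ?_⟩
  · nlinarith [sq_nonneg (a i - b i), sq_nonneg (a i), sq_nonneg (b i)]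
  have h2 := h
  simp only [Real.rpow_two] at h2
  rw [← Real.sqrt_eq_rpow, ← Real.sqrt_eq_rpow, ← Real.sqrt_mul (tsum_nonneg fun i => sq_nonneg _)] at h2
  have h0 : 0 ≤ (∑' i, a i ^ 2) * ∑' i, b i ^ 2 :=
    mul_nonneg (tsum_nonneg fun i => sq_nonneg _) (tsum_nonneg fun i => sq_nonneg _)
  calc _ ≤ (Real.sqrt ((∑' i, a i ^ 2) * ∑' i, b i ^ 2)) ^ 2 :=
        pow_le_pow_left₀ (tsum_nonneg fun i => mul_nonneg (ha0 i) (hb0 i)) h2 2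
    _ = _ := Real.sq_sqrt h0

theorem one_le_jap {n : ℕ} (k : Zn n) : 1 ≤ jap k := by
  unfold jap
  rw [Real.one_le_sqrt]
  have : 0 ≤ ∑ i, ((k i : ℝ)) ^ 2 := Finset.sum_nonneg fun i _ => sq_nonneg _
  linarith

/-- bias factor -/
def biasF {d n : ℕ} (w : Zn n → Gr d n → ℝ) (s r : ℝ) (c : Zn n → ℂ) (ε : ℝ) (k : Zn n) : ℝ :=
  (Real.sqrt ε * jap k ^ (2*s) * pSymb w s (Real.sqrt ε) k) ^ 2 * (jap k ^ (2*r) * ‖c k‖ ^ 2)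

theorem bias_bd {d n : ℕ} (w : Zn n → Gr d n → ℝ) (s r : ℝ) (c : Zn n → ℂ) (ε : ℝ) (k : Zn n)
    (hW : 0 < Wk w k) : biasF w s r c ε k ≤ jap k ^ (2*r) * ‖c k‖ ^ 2 := by
  have hj := one_le_jap k
  have hJ : 0 < jap k ^ (2*s) := Real.rpow_pos_of_pos (by linarith) _
  have hR : 0 < jap k ^ (2*r) := Real.rpow_pos_of_pos (by linarith) _
  have ha := Real.sqrt_nonneg ε
  unfold biasF pSymb
  apply mul_le_of_le_one_left (by positivity)
  apply pow_le_one₀ (by positivity)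
  rw [← div_eq_mul_inv]
  apply div_le_one_of_le₀ _ (by positivity)
  linarith

theorem bias_tendsto {d n : ℕ} (w : Zn n → Gr d n → ℝ) (s r : ℝ) (c : Zn n → ℂ)
    (hW : ∀ k, 0 < Wk w k) (hc : Summable fun k : Zn n => jap k ^ (2*r) * ‖c k‖ ^ 2) :
    Tendsto (fun ε => ∑' k, biasF w s r c ε k) (nhds 0) (nhds 0) := by
  have h := tendsto_tsum_of_dominated_convergence (𝓕 := nhds (0:ℝ)) (f := biasF w s r c)
    (g := fun _ => 0) hc ?_ ?_
  · simpa using h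
  · intro k
    have hk := hW k
    have : ContinuousAt (fun ε => biasF w s r c ε k) 0 := by
      unfold biasF pSymb
      have : Wk w k + Real.sqrt 0 * jap k ^ (2*s) ≠ 0 := by simp [hk.ne']
      fun_prop (disch := assumption)
    have h2 := this.tendsto
    simpa [biasF] using h2
  · refine Eventually.of_forall fun ε k => ?_
    rw [Real.norm_of_nonneg]
    · exact bias_bd w s r c ε k (hW k)
    · have hj := one_le_jap k
      have hR : 0 < jap k ^ (2*r) := Real.rpow_pos_of_pos (by linarith) _
      unfold biasF
      positivity

theorem point_bd {d n : ℕ} (w : Zn n → Gr d n → ℝ) (hw : ∀ k A, 0 < w k A) (Cw : ℝ)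
    (k : Zn n) (hWsum : Summable (fun A : {A : Gr d n // perp k A} => (w k A.1) ^ 2))
    (hW : 0 < Wk w k) (hWub : Wk w k ≤ Cw ^ 2)
    (r t s : ℝ) (hrts : r ≤ 2*s + t) (c : Zn n → ℂ) (g : Gr d n → Zn n → ℂ) (ε : ℝ) (hε : 0 < ε)
    (hg : Summable (fun A : Gr d n => jap k ^ (2*t) * (w k A)^2 * ‖g A k‖^2)) :
    jap k ^ (2*r) * ‖tikhRecon w s (Real.sqrt ε) (fun A k' => radonC A c k' + g A k') k - c k‖ ^ 2
      ≤ 2 * biasF w s r c ε k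
        + 2 * (Cw ^ 2 * ε⁻¹) * ∑' A : Gr d n, jap k ^ (2*t) * (w k A)^2 * ‖g A k‖^2 := by
  have hj := one_le_jap k
  have hj0 : 0 < jap k := by linarith
  have hT : 0 < jap k ^ (2*t) := Real.rpow_pos_of_pos hj0 _
  have hJ : 0 < jap k ^ (2*s) := Real.rpow_pos_of_pos hj0 _
  have hR : 0 < jap k ^ (2*r) := Real.rpow_pos_of_pos hj0 _
  have ha : 0 < Real.sqrt ε := Real.sqrt_pos.2 hε
  have hg1 : Summable (fun A : Gr d n => (w k A * ‖g A k‖)^2) := by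
    have := hg.mul_left (jap k ^ (2*t))⁻¹
    refine this.congr fun A => ?_
    field_simp
  have hg2 : Summable (fun A : {A : Gr d n // perp k A} => (w k A.1 * ‖g A.1 k‖)^2) :=
    hg1.subtype _
  have hle : ∑' A : {A : Gr d n // perp k A}, (w k A.1 * ‖g A.1 k‖)^2
      ≤ ∑' A : Gr d n, (w k A * ‖g A k‖)^2 :=
    hg1.tsum_subtype_le _ {A | perp k A} (fun A => sq_nonneg _)
  obtain ⟨hs1, hcs⟩ := aux_cs (fun A : {A : Gr d n // perp k A} => w k A.1)
    (fun A => w k A.1 * ‖g A.1 k‖) (fun A => (hw k A.1).le)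
    (fun A => mul_nonneg (hw k A.1).le (norm_nonneg _)) hWsum hg2
  have hnorm : ∀ A : {A : Gr d n // perp k A},
      ‖((w k A.1 : ℝ) : ℂ)^2 * g A.1 k‖ = w k A.1 * (w k A.1 * ‖g A.1 k‖) := by
    intro A
    rw [norm_mul, norm_pow, Complex.norm_real, Real.norm_of_nonneg (hw k A.1).le]
    ring
  have hs2 : Summable (fun A : {A : Gr d n // perp k A} => ‖((w k A.1 : ℝ) : ℂ)^2 * g A.1 k‖) :=
    hs1.congr fun A => (hnorm A).symm
  set G : ℂ := radonStar w g k with hG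
  set D : ℝ := ∑' A : Gr d n, (w k A * ‖g A k‖)^2 with hD
  have hD0 : 0 ≤ D := tsum_nonneg fun A => sq_nonneg _
  have hGbd : ‖G‖ ^ 2 ≤ Cw ^ 2 * D := by
    have h1 : ‖G‖ ≤ ∑' A : {A : Gr d n // perp k A}, w k A.1 * (w k A.1 * ‖g A.1 k‖) := by
      have := norm_tsum_le_tsum_norm hs2
      rw [tsum_congr hnorm] at this
      exact this
    calc ‖G‖ ^ 2 ≤ _ := pow_le_pow_left₀ (norm_nonneg _) h1 2
      _ ≤ _ := hcs
      _ ≤ Cw ^ 2 * D := by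
        apply mul_le_mul hWub hle (tsum_nonneg fun A => sq_nonneg _) (sq_nonneg _)
  have hstar : radonStar w (fun A k' => radonC A c k' + g A k') k = (Wk w k : ℂ) * c k + G := by
    have e : ∀ A : {A : Gr d n // perp k A},
        ((w k A.1 : ℝ) : ℂ)^2 * (radonC A.1 c k + g A.1 k)
          = (((w k A.1)^2 : ℝ) : ℂ) * c k + ((w k A.1 : ℝ) : ℂ)^2 * g A.1 k := by
      intro A
      rw [radonC, if_pos A.2]
      push_cast
      ring
    have hsW : Summable (fun A : {A : Gr d n // perp k A} => (((w k A.1)^2 : ℝ) : ℂ)) :=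
      Complex.ofRealCLM.summable hWsum
    rw [radonStar, tsum_congr e, (hsW.mul_right (c k)).tsum_add hs2.of_norm, tsum_mul_right,
      ← Complex.ofReal_tsum]
    rfl
  set p : ℝ := pSymb w s (Real.sqrt ε) k with hp
  set α : ℝ := Real.sqrt ε with hα
  set J : ℝ := jap k ^ (2*s) with hJd
  have hden : 0 < Wk w k + α * J := by positivity
  have hpd : p * (Wk w k + α * J) = 1 := by
    rw [hp, pSymb]; exact inv_mul_cancel₀ hden.ne'
  have hp0 : 0 < p := by rw [hp, pSymb]; positivity
  have hid : tikhRecon w s α (fun A k' => radonC A c k' + g A k') k - c k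
      = -((α * J * p : ℝ) : ℂ) * c k + (p : ℂ) * G := by
    rw [tikhRecon, hstar]
    have : (p : ℂ) * ((Wk w k : ℂ) + α * J) = 1 := by exact_mod_cast hpd
    push_cast
    linear_combination (c k) * this
  have hnb : ‖tikhRecon w s α (fun A k' => radonC A c k' + g A k') k - c k‖ ^ 2
      ≤ 2 * ((α * J * p) ^ 2 * ‖c k‖ ^ 2) + 2 * (p ^ 2 * ‖G‖ ^ 2) := by
    rw [hid]
    have h1 := norm_add_le (-((α * J * p : ℝ) : ℂ) * c k) ((p : ℂ) * G)
    have e1 : ‖-((α * J * p : ℝ) : ℂ) * c k‖ = α * J * p * ‖c k‖ := by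
      rw [norm_mul, norm_neg, Complex.norm_real, Real.norm_of_nonneg (by positivity)]
    have e2 : ‖(p : ℂ) * G‖ = p * ‖G‖ := by
      rw [norm_mul, Complex.norm_real, Real.norm_of_nonneg hp0.le]
    rw [e1, e2] at h1
    have h2 := pow_le_pow_left₀ (norm_nonneg _) h1 2
    nlinarith [sq_nonneg (α * J * p * ‖c k‖ - p * ‖G‖)]
  have hpe : jap k ^ (2*r) * p ^ 2 ≤ ε⁻¹ * jap k ^ (2*t) := by
    have h1 : α * J * p ≤ 1 := by nlinarith [mul_pos hp0 hW]
    have h2 : (α * J * p) ^ 2 ≤ 1 := pow_le_one₀ (by positivity) h1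
    have h3 : α ^ 2 = ε := Real.sq_sqrt hε.le
    have h4 : jap k ^ (2*r) ≤ J ^ 2 * jap k ^ (2*t) := by
      have : J ^ 2 * jap k ^ (2*t) = jap k ^ (2*(2*s+t)) := by
        rw [hJd, sq, ← Real.rpow_add hj0, ← Real.rpow_add hj0]; congr 1; ring
      rw [this]
      exact Real.rpow_le_rpow_of_exponent_le hj (by linarith)
    rw [inv_mul_eq_div, le_div_iff₀ hε]
    calc jap k ^ (2*r) * p ^ 2 * ε ≤ J ^ 2 * jap k ^ (2*t) * p ^ 2 * ε := by gcongr
      _ = (α * J * p) ^ 2 * jap k ^ (2*t) := by rw [← h3]; ring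
      _ ≤ 1 * jap k ^ (2*t) := by gcongr
      _ = _ := one_mul _
  have hDt : ∑' A : Gr d n, jap k ^ (2*t) * (w k A)^2 * ‖g A k‖^2 = jap k ^ (2*t) * D := by
    rw [hD, ← tsum_mul_left]
    exact tsum_congr fun A => by ring
  rw [hDt]
  calc _ ≤ jap k ^ (2*r) * (2 * ((α * J * p) ^ 2 * ‖c k‖ ^ 2) + 2 * (p ^ 2 * ‖G‖ ^ 2)) := by gcongr
    _ = 2 * ((α * J * p) ^ 2 * (jap k ^ (2*r) * ‖c k‖ ^ 2))
          + 2 * ((jap k ^ (2*r) * p ^ 2) * ‖G‖ ^ 2) := by ring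
    _ ≤ 2 * ((α * J * p) ^ 2 * (jap k ^ (2*r) * ‖c k‖ ^ 2))
          + 2 * ((ε⁻¹ * jap k ^ (2*t)) * (Cw ^ 2 * D)) := by gcongr
    _ = _ := by rw [biasF]; ring

/-- Regularization strategy.
For `2s + t ≥ r`, `δ ≥ 0`, `s > 0` and `f ∈ H^{r+δ}(𝕋ⁿ)`, with the choice
`α(ε) = √ε` the reconstruction `P_{w,s}^{α(ε)} R_d^*` is a regularization
strategy:
`sup { ‖P_{w,s}^{α(ε)} R_d^*(R_d f + g) − f‖_{H^r} : ‖g‖_{L_t^{2,2}} ≤ ε } → 0`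
as `ε → 0⁺`. -/
theorem statement8 {n d : ℕ} (hn : 2 ≤ n) (hd1 : 1 ≤ d) (hd2 : d ≤ n - 1)
    (w : Zn n → Gr d n → ℝ) (hw : IsWeight w) (cw Cw : ℝ) (hcw : 0 < cw) (hCw : 0 < Cw)
    (hWsum : ∀ k : Zn n, Summable (fun A : {A : Gr d n // perp k A} => (w k A.1) ^ 2))
    (hWlb : ∀ k : Zn n, cw ^ 2 ≤ Wk w k) (hWub : ∀ k : Zn n, Wk w k ≤ Cw ^ 2)
    (r t s δ : ℝ) (hrts : r ≤ 2*s + t) (hδ : 0 ≤ δ) (hs : 0 < s)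
    (f : PDist n) (hf : hsNormSq (r + δ) f.coef < ∞) :
    Filter.Tendsto
      (fun ε : ℝ =>
        ⨆ (g : Gr d n → PDist n)
          (_ : dataNorm t w (fun A => (g A).coef) ≤ ENNReal.ofReal ε),
          hsNorm r (fun k : Zn n =>
            tikhRecon w s (Real.sqrt ε)
              (fun A k' => radonC A f.coef k' + (g A).coef k') k - f.coef k))
      (nhdsWithin 0 (Set.Ioi (0:ℝ))) (nhds 0) := by
  have hW : ∀ k, 0 < Wk w k := fun k => lt_of_lt_of_le (by positivity) (hWlb k)
  have hjp : ∀ (k : Zn n) (x : ℝ), 0 < jap k ^ x := fun k x =>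
    Real.rpow_pos_of_pos (by linarith [one_le_jap k]) _
  have hc : Summable fun k : Zn n => jap k ^ (2*r) * ‖f.coef k‖ ^ 2 := by
    have h1 : Summable fun k : Zn n => jap k ^ (2*(r+δ)) * ‖f.coef k‖ ^ 2 := by
      have := ENNReal.summable_toReal hf.ne
      refine this.congr fun k => ENNReal.toReal_ofReal ?_
      have := hjp k (2*(r+δ))
      positivity
    refine Summable.of_nonneg_of_le (fun k => ?_) (fun k => ?_) h1
    · have := hjp k (2*r)
      positivity
    · gcongr
      · exact one_le_jap k
      · linarith
  have hb0 : ∀ ε k, 0 ≤ biasF w s r f.coef ε k := fun ε k => by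
    have := hjp k (2*r)
    unfold biasF
    positivity
  have hbs : ∀ ε, Summable (biasF w s r f.coef ε) := fun ε =>
    Summable.of_nonneg_of_le (hb0 ε) (fun k => bias_bd w s r f.coef ε k (hW k)) hc
  have hlim : Tendsto (fun ε : ℝ => (ENNReal.ofReal
      (2 * (∑' k, biasF w s r f.coef ε k) + 2 * Cw ^ 2 * ε)) ^ (1/2 : ℝ))
      (nhdsWithin 0 (Set.Ioi (0:ℝ))) (nhds 0) := by
    have h1 := (bias_tendsto w s r f.coef hW hc).const_mul 2
    have h2 : Tendsto (fun ε : ℝ => 2 * Cw ^ 2 * ε) (nhds 0) (nhds (2 * Cw ^ 2 * 0)) :=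
      tendsto_id.const_mul _
    have h3 := ENNReal.tendsto_ofReal (h1.add h2)
    have h4 := ((ENNReal.continuous_rpow_const (y := (1/2 : ℝ))).tendsto _).comp h3
    have h5 := h4.mono_left (nhdsWithin_le_nhds (s := Set.Ioi (0:ℝ)))
    simpa [Function.comp_def] using h5
  refine tendsto_of_tendsto_of_tendsto_of_le_of_le' tendsto_const_nhds hlim
    (Eventually.of_forall fun ε => zero_le) ?_
  filter_upwards [self_mem_nhdsWithin] with ε hε
  have hε : 0 < ε := hε
  refine iSup₂_le fun g hg => ?_
  unfold hsNorm
  refine ENNReal.rpow_le_rpow ?_ (by norm_num)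
  have hg2 : dataNormSq t w (fun A => (g A).coef) ≤ ENNReal.ofReal (ε ^ 2) := by
    have := ENNReal.rpow_le_rpow hg (z := 2) (by norm_num)
    unfold dataNorm at this
    rw [← ENNReal.rpow_mul] at this
    norm_num at this
    rwa [ENNReal.ofReal_pow hε.le]
  unfold dataNormSq at hg2
  rw [ENNReal.tsum_comm] at hg2
  have hterm0 : ∀ (k : Zn n) (A : Gr d n),
      0 ≤ jap k ^ (2*t) * (w k A)^2 * ‖(g A).coef k‖^2 := fun k A => by
    have := hjp k (2*t)
    positivity
  have hgs : ∀ k : Zn n, Summable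
      (fun A : Gr d n => jap k ^ (2*t) * (w k A)^2 * ‖(g A).coef k‖^2) := fun k => by
    have h1 := ne_top_of_le_ne_top ENNReal.ofReal_ne_top ((ENNReal.le_tsum k).trans hg2)
    exact (ENNReal.summable_toReal h1).congr fun A => ENNReal.toReal_ofReal (hterm0 k A)
  have hg3 : ∑' k : Zn n, ENNReal.ofReal
      (∑' A : Gr d n, jap k ^ (2*t) * (w k A)^2 * ‖(g A).coef k‖^2) ≤ ENNReal.ofReal (ε ^ 2) := by
    refine le_trans (le_of_eq (tsum_congr fun k => ?_)) hg2
    exact ENNReal.ofReal_tsum_of_nonneg (hterm0 k) (hgs k)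
  unfold hsNormSq
  calc _ ≤ ∑' k : Zn n, (ENNReal.ofReal 2 * ENNReal.ofReal (biasF w s r f.coef ε k)
        + ENNReal.ofReal (2 * (Cw ^ 2 * ε⁻¹)) * ENNReal.ofReal
          (∑' A : Gr d n, jap k ^ (2*t) * (w k A)^2 * ‖(g A).coef k‖^2)) := by
        refine ENNReal.tsum_le_tsum fun k => ?_
        rw [← ENNReal.ofReal_mul (by norm_num), ← ENNReal.ofReal_mul (by positivity),
          ← ENNReal.ofReal_add (mul_nonneg (by norm_num) (hb0 ε k))
            (mul_nonneg (by positivity) (tsum_nonneg (hterm0 k)))]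
        exact ENNReal.ofReal_le_ofReal (point_bd w hw.1 Cw k (hWsum k) (hW k) (hWub k) r t s hrts
          f.coef (fun A => (g A).coef) ε hε (hgs k))
    _ ≤ ENNReal.ofReal 2 * ENNReal.ofReal (∑' k, biasF w s r f.coef ε k)
        + ENNReal.ofReal (2 * (Cw ^ 2 * ε⁻¹)) * ENNReal.ofReal (ε ^ 2) := by
        rw [ENNReal.tsum_add, ENNReal.tsum_mul_left, ENNReal.tsum_mul_left,
          ENNReal.ofReal_tsum_of_nonneg (hb0 ε) (hbs ε)]
        gcongr
    _ = _ := by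
        rw [← ENNReal.ofReal_mul (by norm_num), ← ENNReal.ofReal_mul (by positivity),
          ← ENNReal.ofReal_add (mul_nonneg (by norm_num) (tsum_nonneg (hb0 ε))) (by positivity)]
        congr 2
        field_simp
end
end

section
/- Let n ≥ 2 and 1 ≤ d ≤ n−1 be integers, s ∈ ℝ, and let w be a weight such that there exists C_w > 0 with Σ_{A∈Ω_k} w(k,A)² ≤ C_w² for every k ∈ ℤ^n. Then the d-plane Radon transform R_d : H^s(𝕋^n) → L_s^{2,2}(X_{d,n};w) is C_w-Lipschitz: ‖R_d f‖_{L_s^{2,2}(X_{d,n};w)} ≤ C_w ‖f‖_{H^s(𝕋^n)} for all f ∈ H^s(𝕋^n). -/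
/-!
Setting: the flat torus 𝕋ⁿ = ℝⁿ/ℤⁿ and its d-plane Radon transform.

* Periodic distributions 𝒯' are modeled, via the structure theorem, by their
  Fourier coefficient sequences `ℤⁿ → ℂ` of at most polynomial growth (`PDist`).
* `Gr d n` is the Grassmannian of d-dimensional subspaces of ℚⁿ.
* The d-plane Radon transform is encoded on the Fourier side by the Fourier
  slice identity `(R_{d,A} f)^(k) = f̂(k)` if `k ⊥ A` and `0` otherwise (`radonC`).
* `hsNormSq s c = Σ_k ⟨k⟩^{2s} |c k|²` is the squared H^s(𝕋ⁿ) norm (in ℝ≥0∞),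
  `dataNormSq s w g = Σ_A Σ_k ⟨k⟩^{2s} w(k,A)² |ĝ(k,A)|²` is the squared
  L_s^{2,2}(X_{d,n}; w) norm, `hsNorm`/`dataNorm` are their square roots.
* `Wk w k = Σ_{A ∈ Ω_k} w(k,A)²` and `radonStar` is the adjoint
  `(R_d^* g)^(k) = Σ_{A ∈ Ω_k} w(k,A)² ĝ(k,A)`.
-/

open scoped ENNReal BigOperators
open MeasureTheory Classical Filter

noncomputable section

/-- `R_d : H^s(𝕋ⁿ) → L_s^{2,2}(X_{d,n};w)` is
`C_w`-Lipschitz. If `Σ_{A∈Ω_k} w(k,A)² ≤ C_w²` for all `k`, then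
`‖R_d f‖_{L_s^{2,2}(X_{d,n};w)} ≤ C_w ‖f‖_{H^s(𝕋ⁿ)}` for all `f ∈ H^s(𝕋ⁿ)`. -/
theorem statement17 {n d : ℕ} (hn : 2 ≤ n) (hd1 : 1 ≤ d) (hd2 : d ≤ n - 1)
    (s : ℝ) (w : Zn n → Gr d n → ℝ) (hw : IsWeight w) (Cw : ℝ) (hCw : 0 < Cw)
    (hWsum : ∀ k : Zn n, Summable (fun A : {A : Gr d n // perp k A} => (w k A.1) ^ 2))
    (hWle : ∀ k : Zn n, Wk w k ≤ Cw ^ 2) :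
    ∀ f : PDist n, hsNormSq s f.coef < ∞ →
      dataNorm s w (fun A => radonC A f.coef) ≤ ENNReal.ofReal Cw * hsNorm s f.coef := by
  intro f _
  have key : dataNormSq s w (fun A => radonC A f.coef)
      ≤ ENNReal.ofReal (Cw ^ 2) * hsNormSq s f.coef := by
    unfold dataNormSq hsNormSq
    rw [ENNReal.tsum_comm, ← ENNReal.tsum_mul_left]
    refine ENNReal.tsum_le_tsum fun k => ?_
    have hj : 0 ≤ jap k ^ (2 * s) := Real.rpow_nonneg (Real.sqrt_nonneg _) _
    have hb : 0 ≤ jap k ^ (2 * s) * ‖f.coef k‖ ^ 2 := by positivity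
    have h1 : ∀ A : Gr d n,
        ENNReal.ofReal (jap k ^ (2 * s) * (w k A) ^ 2 * ‖radonC A f.coef k‖ ^ 2)
          = Set.indicator {A : Gr d n | perp k A} (fun A => ENNReal.ofReal ((w k A) ^ 2)) A
            * ENNReal.ofReal (jap k ^ (2 * s) * ‖f.coef k‖ ^ 2) := by
      intro A
      by_cases hA : perp k A
      · rw [Set.indicator_of_mem (by exact hA), ← ENNReal.ofReal_mul (sq_nonneg _)]
        simp only [radonC, hA, if_true]
        congr 1
        ring
      · rw [Set.indicator_of_notMem (by exact hA)]
        simp [radonC, hA]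
    rw [tsum_congr h1, ENNReal.tsum_mul_right]
    gcongr
    rw [← tsum_subtype]
    have h2 : ∑' A : {A : Gr d n // perp k A}, ENNReal.ofReal ((w k A.1) ^ 2)
        = ENNReal.ofReal (Wk w k) :=
      (ENNReal.ofReal_tsum_of_nonneg (fun A => sq_nonneg _) (hWsum k)).symm
    exact h2.le.trans (ENNReal.ofReal_le_ofReal (hWle k))
  unfold dataNorm hsNorm
  refine (ENNReal.rpow_le_rpow key (by norm_num)).trans ?_
  rw [ENNReal.mul_rpow_of_nonneg _ _ (by norm_num),
    ENNReal.ofReal_rpow_of_nonneg (sq_nonneg _) (by norm_num),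
    ← Real.sqrt_eq_rpow, Real.sqrt_sq hCw.le]
end
end
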